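/- Fix λ > 0 and for intuitionistic fuzzy values α, β define the parametric divergence JS^{(λ)}(α, β) = √(Z_λ(α, β)/2), where Z_λ(α,β) = L(1−μ_α^λ, 1−μ_β^λ) + L(ν_α^λ, ν_β^λ). Then JS^{(λ)}(α, β) = 0 if and only if α = β, and if α ⊊ β₁ ⊊ β₂ in Atanassov's order then JS^{(λ)}(α, β₁) < JS^{(λ)}(α, β₂). -/

import Mathlib

/-- `L p q = p·log₂(2p/(p+q)) + q·log₂(2q/(p+q))`, with Lean's conventions
`0 * log₂ _ = 0` and `x / 0 = 0`, `log₂ 0 = 0` implementing `0·log 0 = 0`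
and `0·log(0/0) = 0`. -/
noncomputable def L (p q : ℝ) : ℝ :=
  p * Real.logb 2 (2 * p / (p + q)) + q * Real.logb 2 (2 * q / (p + q))

/-- An intuitionistic fuzzy value: a pair `⟨μ, ν⟩` with `0 ≤ μ`, `0 ≤ ν`,
`μ + ν ≤ 1` (hence also `μ ≤ 1` and `ν ≤ 1`). -/
@[ext]
structure IFV where
  mu : ℝ
  nu : ℝ
  mu_nonneg : 0 ≤ mu
  nu_nonneg : 0 ≤ nu
  sum_le : mu + nu ≤ 1

/-- `Z(α,β) = L(1−μ_α, 1−μ_β) + L(ν_α, ν_β)`. -/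
noncomputable def Z (a b : IFV) : ℝ := L (1 - a.mu) (1 - b.mu) + L a.nu b.nu

/-- The normalized Jensen–Shannon IF divergence `JS(α,β) = √(Z(α,β)/2)`. -/
noncomputable def JS (a b : IFV) : ℝ := Real.sqrt (Z a b / 2)

/-- Atanassov's order: `α ⊂ β` iff `μ_α ≤ μ_β` and `ν_α ≥ ν_β`. -/
def IFV.sub (a b : IFV) : Prop := a.mu ≤ b.mu ∧ b.nu ≤ a.nu

/-- Strict Atanassov order: `α ⊊ β` iff `α ⊂ β` and `α ≠ β`. -/
def IFV.ssub (a b : IFV) : Prop := a.sub b ∧ a ≠ b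

/-- The IFV `⟨1, 0⟩`. -/
def IFV.posOne : IFV := ⟨1, 0, by norm_num, le_rfl, by norm_num⟩

/-- The IFV `⟨0, 1⟩`. -/
def IFV.negOne : IFV := ⟨0, 1, le_rfl, by norm_num, by norm_num⟩

/-- The parametric Jensen–Shannon IF divergence
`JS^{(λ)}(α,β) = √(Z_λ(α,β)/2)` with
`Z_λ(α,β) = L(1−μ_α^λ, 1−μ_β^λ) + L(ν_α^λ, ν_β^λ)` (real powers). -/
noncomputable def JSl (l : ℝ) (a b : IFV) : ℝ :=
  Real.sqrt ((L (1 - a.mu ^ l) (1 - b.mu ^ l) + L (a.nu ^ l) (b.nu ^ l)) / 2)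

/-!
Put `f x = x log x`. On nonnegative arguments `L p q` is, up to the factor `2 / log 2`, the Jensen
gap `(f p + f q) / 2 - f ((p + q) / 2)`. As `f` is strictly convex on `[0, ∞)`, this gap is
nonnegative and vanishes only on the diagonal. It also increases strictly as `q ≤ p` moves away from
`p`: for `r < q ≤ p` the interval `[(p + r) / 2, (p + q) / 2]` is half as long as `[r, q]` and lies
to the right of it, so `f` has a larger secant slope there. Both facts pass to `JSl` because
`x ↦ 1 - x ^ l` and `x ↦ x ^ l` are strictly monotone on `[0, ∞)`.
-/

section JensenGap

variable {𝕜 : Type*} [Field 𝕜]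

/-- The midpoint Jensen gap (Burbea–Rao divergence) of `f` at `x` and `y`, which measures the
convexity of `f` between them. -/
def jensenGap (f : 𝕜 → 𝕜) (x y : 𝕜) : 𝕜 :=
  (f x + f y) / 2 - f ((x + y) / 2)

variable [LinearOrder 𝕜] [IsStrictOrderedRing 𝕜] {s : Set 𝕜} {f : 𝕜 → 𝕜} {x y : 𝕜}

theorem jensenGap_self (f : 𝕜 → 𝕜) (x : 𝕜) : jensenGap f x x = 0 := by
  simp only [jensenGap, add_self_div_two, sub_self]

theorem jensenGap_nonneg (hf : ConvexOn 𝕜 s f) (hx : x ∈ s) (hy : y ∈ s) :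
    0 ≤ jensenGap f x y := by
  have h := hf.2 hx hy one_half_pos.le one_half_pos.le (add_halves 1)
  simp only [smul_eq_mul, one_div_mul_eq_div, ← add_div] at h
  exact sub_nonneg.2 h

theorem jensenGap_eq_zero_iff (hf : StrictConvexOn 𝕜 s f) (hx : x ∈ s) (hy : y ∈ s) :
    jensenGap f x y = 0 ↔ x = y := by
  refine ⟨fun h => ?_, fun h => h ▸ jensenGap_self f x⟩
  by_contra hne
  have hlt := hf.2 hx hy hne one_half_pos one_half_pos (add_halves 1)
  simp only [smul_eq_mul, one_div_mul_eq_div, ← add_div] at hlt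
  exact (sub_pos.2 hlt).ne' h

theorem strictAntiOn_jensenGap (hf : StrictConvexOn 𝕜 s f) (hx : x ∈ s) :
    StrictAntiOn (jensenGap f x) (s ∩ Set.Iic x) := by
  rintro z ⟨hz, -⟩ y ⟨hy, hyx : y ≤ x⟩ hzy
  set m := (x + z) / 2 with hm
  set M := (x + y) / 2 with hM
  have hzm : z < m := by linarith
  have hmM : m < M := by linarith
  have hyM : y ≤ M := by linarith
  have hms : m ∈ s := hf.1.ordConnected.out hz hx ⟨hzm.le, by linarith⟩
  have hMs : M ∈ s := hf.1.ordConnected.out hy hx ⟨hyM, by linarith⟩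
  have hslope : (f y - f z) / (y - z) < (f m - f M) / (m - M) :=
    calc (f y - f z) / (y - z)
        ≤ (f M - f z) / (M - z) :=
          hf.convexOn.secant_mono hz hy hMs hzy.ne' (hzm.trans hmM).ne' hyM
      _ = (f z - f M) / (z - M) := by rw [← neg_div_neg_eq, neg_sub, neg_sub]
      _ < (f m - f M) / (m - M) :=
          hf.secant_strict_mono hMs hz hms (hzm.trans hmM).ne hmM.ne hzm
  have hlen : m - M = -((y - z) / 2) := by rw [hm, hM]; ring
  have hdiff : f y - f z < 2 * (f M - f m) := by
    rw [hlen, div_neg, ← neg_div, neg_sub, div_div_eq_mul_div,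
      div_lt_div_iff_of_pos_right (sub_pos.2 hzy)] at hslope
    linarith
  change (f x + f y) / 2 - f M < (f x + f z) / 2 - f m
  linarith

end JensenGap

section LFunction

variable {p q : ℝ}

theorem mul_logb_two_mul_div_add (hp : 0 ≤ p) (hq : 0 ≤ q) :
    p * Real.logb 2 (2 * p / (p + q)) =
      (p * Real.log p - p * Real.log ((p + q) / 2)) / Real.log 2 := by
  rcases hp.eq_or_lt with rfl | hp
  · simp
  · rw [Real.logb, mul_comm 2 p, mul_div_assoc, ← inv_div (p + q) 2, ← div_eq_mul_inv,
      Real.log_div hp.ne' (by positivity)]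
    ring

theorem L_eq_jensenGap (hp : 0 ≤ p) (hq : 0 ≤ q) :
    L p q = 2 / Real.log 2 * jensenGap (fun x => x * Real.log x) p q := by
  have hq' := mul_logb_two_mul_div_add hq hp
  rw [add_comm q p] at hq'
  rw [L, mul_logb_two_mul_div_add hp hq, hq', jensenGap]
  ring

theorem L_nonneg (hp : 0 ≤ p) (hq : 0 ≤ q) : 0 ≤ L p q := by
  rw [L_eq_jensenGap hp hq]
  exact mul_nonneg (by positivity) (jensenGap_nonneg Real.convexOn_mul_log hp hq)

theorem L_eq_zero_iff (hp : 0 ≤ p) (hq : 0 ≤ q) : L p q = 0 ↔ p = q := by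
  rw [L_eq_jensenGap hp hq, mul_eq_zero_iff_left (by positivity),
    jensenGap_eq_zero_iff Real.strictConvexOn_mul_log hp hq]

theorem strictAntiOn_L (p : ℝ) : StrictAntiOn (L p) (Set.Icc 0 p) := by
  rintro r ⟨hr, hrp⟩ q ⟨hq, hqp⟩ hrq
  have hp : 0 ≤ p := hr.trans hrp
  rw [L_eq_jensenGap hp hq, L_eq_jensenGap hp hr]
  exact mul_lt_mul_of_pos_left
    (strictAntiOn_jensenGap Real.strictConvexOn_mul_log hp ⟨hr, hrp⟩ ⟨hq, hqp⟩ hrq) (by positivity)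

theorem strictMonoOn_L_one_sub_rpow {l x : ℝ} (hl : 0 < l) (hx : 0 ≤ x) :
    StrictMonoOn (fun y => L (1 - x ^ l) (1 - y ^ l)) (Set.Icc x 1) :=
  (strictAntiOn_L (1 - x ^ l)).comp
    (fun _ hy _ _ hyz => sub_lt_sub_left (Real.rpow_lt_rpow (hx.trans hy.1) hyz hl) 1)
    fun _ hy => ⟨sub_nonneg.2 (Real.rpow_le_one (hx.trans hy.1) hy.2 hl.le),
      sub_le_sub_left (Real.rpow_le_rpow hx hy.1 hl.le) 1⟩

theorem strictAntiOn_L_rpow {l : ℝ} (hl : 0 < l) (x : ℝ) :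
    StrictAntiOn (fun y => L (x ^ l) (y ^ l)) (Set.Icc 0 x) :=
  (strictAntiOn_L (x ^ l)).comp_strictMonoOn
    (fun _ hy _ _ hyz => Real.rpow_lt_rpow hy.1 hyz hl)
    fun _ hy => ⟨Real.rpow_nonneg hy.1 l, Real.rpow_le_rpow hy.1 hy.2 hl.le⟩

end LFunction

namespace IFV

theorem mu_le_one (a : IFV) : a.mu ≤ 1 := by
  linarith [a.nu_nonneg, a.sum_le]

theorem one_sub_mu_rpow_nonneg (a : IFV) {l : ℝ} (hl : 0 ≤ l) : 0 ≤ 1 - a.mu ^ l :=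
  sub_nonneg.2 (Real.rpow_le_one a.mu_nonneg a.mu_le_one hl)

theorem nu_rpow_nonneg (a : IFV) (l : ℝ) : 0 ≤ a.nu ^ l :=
  Real.rpow_nonneg a.nu_nonneg l

theorem ssub.mu_lt_or_nu_lt {a b : IFV} (h : a.ssub b) : a.mu < b.mu ∨ b.nu < a.nu := by
  obtain ⟨⟨hmu, hnu⟩, hne⟩ := h
  by_contra! hge
  exact hne (IFV.ext (hmu.antisymm hge.1) (hge.2.antisymm hnu))

end IFV

section Divergence

variable {a b c : IFV} {l : ℝ}

/-- The quantity `Z_λ(α, β)`, twice the square of `JS^{(λ)}(α, β)`. -/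
noncomputable def Zl (l : ℝ) (a b : IFV) : ℝ :=
  L (1 - a.mu ^ l) (1 - b.mu ^ l) + L (a.nu ^ l) (b.nu ^ l)

theorem JSl_eq_sqrt_Zl (l : ℝ) (a b : IFV) : JSl l a b = √(Zl l a b / 2) :=
  rfl

theorem Zl_nonneg (hl : 0 ≤ l) (a b : IFV) : 0 ≤ Zl l a b :=
  add_nonneg (L_nonneg (a.one_sub_mu_rpow_nonneg hl) (b.one_sub_mu_rpow_nonneg hl))
    (L_nonneg (a.nu_rpow_nonneg l) (b.nu_rpow_nonneg l))

theorem Zl_eq_zero_iff (hl : 0 < l) : Zl l a b = 0 ↔ a = b := by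
  have hmu (c : IFV) := c.one_sub_mu_rpow_nonneg hl.le
  have hnu (c : IFV) := c.nu_rpow_nonneg l
  rw [Zl, add_eq_zero_iff_of_nonneg (L_nonneg (hmu a) (hmu b)) (L_nonneg (hnu a) (hnu b)),
    L_eq_zero_iff (hmu a) (hmu b), L_eq_zero_iff (hnu a) (hnu b), sub_right_inj,
    Real.rpow_left_inj a.mu_nonneg b.mu_nonneg hl.ne',
    Real.rpow_left_inj a.nu_nonneg b.nu_nonneg hl.ne', IFV.ext_iff]

theorem Zl_lt_Zl (hl : 0 < l) (hab : a.sub b) (hbc : b.ssub c) : Zl l a b < Zl l a c := by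
  have hmu_mono := strictMonoOn_L_one_sub_rpow hl a.mu_nonneg
  have hnu_anti := strictAntiOn_L_rpow hl a.nu
  have hb_mu : b.mu ∈ Set.Icc a.mu 1 := ⟨hab.1, b.mu_le_one⟩
  have hc_mu : c.mu ∈ Set.Icc a.mu 1 := ⟨hab.1.trans hbc.1.1, c.mu_le_one⟩
  have hb_nu : b.nu ∈ Set.Icc 0 a.nu := ⟨b.nu_nonneg, hab.2⟩
  have hc_nu : c.nu ∈ Set.Icc 0 a.nu := ⟨c.nu_nonneg, hbc.1.2.trans hab.2⟩
  rcases hbc.mu_lt_or_nu_lt with hlt | hlt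
  · exact add_lt_add_of_lt_of_le (hmu_mono hb_mu hc_mu hlt)
      (hnu_anti.antitoneOn hc_nu hb_nu hbc.1.2)
  · exact add_lt_add_of_le_of_lt (hmu_mono.monotoneOn hb_mu hc_mu hbc.1.1)
      (hnu_anti hc_nu hb_nu hlt)

theorem JSl_eq_zero_iff (hl : 0 < l) : JSl l a b = 0 ↔ a = b := by
  rw [JSl_eq_sqrt_Zl, Real.sqrt_eq_zero (div_nonneg (Zl_nonneg hl.le a b) zero_le_two),
    div_eq_zero_iff, or_iff_left two_ne_zero, Zl_eq_zero_iff hl]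

theorem JSl_lt_JSl (hl : 0 < l) (hab : a.sub b) (hbc : b.ssub c) : JSl l a b < JSl l a c :=
  Real.sqrt_lt_sqrt (div_nonneg (Zl_nonneg hl.le a b) zero_le_two)
    (div_lt_div_of_pos_right (Zl_lt_Zl hl hab hbc) zero_lt_two)

end Divergence

theorem JSl_eq_zero_iff_and_strictMono (l : ℝ) (hl : 0 < l) :
    (∀ a b : IFV, JSl l a b = 0 ↔ a = b) ∧
    (∀ a b1 b2 : IFV, a.ssub b1 → b1.ssub b2 → JSl l a b1 < JSl l a b2) :=
  ⟨fun _ _ => JSl_eq_zero_iff hl, fun _ _ _ hab hbc => JSl_lt_JSl hl hab.1 hbc⟩
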